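/- Let X be a compact Hausdorff space and let k be a continuous symmetric positive definite kernel on X with RKHS H. Then k is c-universal if and only if ∫_X ∫_X k(x,y) dμ(x) dμ(y) > 0 for every nonzero μ ∈ M_b(X). -/

import Mathlib

open MeasureTheory Filter Topology RealInnerProductSpace

/-- Integral of a vector-valued function with respect to a finite signed measure,
defined via the Jordan decomposition. -/
noncomputable def svInt {X : Type*} [MeasurableSpace X] {E : Type*}
    [NormedAddCommGroup E] [NormedSpace ℝ E]
    (μ : MeasureTheory.SignedMeasure X) (f : X → E) : E :=
  (∫ x, f x ∂μ.toJordanDecomposition.posPart) - ∫ x, f x ∂μ.toJordanDecomposition.negPart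

/-!
Write `v = ∫ Φ dμ` for the mean embedding of `μ` under a feature map `Φ` of the kernel. Then
`∬ k dμ dμ = ‖v‖²` and `∫ ⟪f, Φ x⟫ dμ(x) = ⟪f, v⟫`, so the double integral is positive unless `μ`
annihilates every function `x ↦ ⟪f, Φ x⟫`. By the Hahn–Banach and Riesz representation theorems,
these functions are dense in `C(X, ℝ)` iff no nonzero signed Radon measure annihilates them all.
-/

section NormedLattice

theorem posPart_smul_of_pos {𝕜 E : Type*} [DivisionRing 𝕜] [PartialOrder 𝕜] [AddCommGroup E]
    [Lattice E] [Module 𝕜 E] [PosSMulMono 𝕜 E] [PosSMulReflectLE 𝕜 E] {c : 𝕜} (hc : 0 < c) (a : E) :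
    (c • a)⁺ = c • a⁺ := by
  calc (c • a)⁺ = c • a ⊔ c • 0 := by rw [smul_zero, posPart_def]
    _ = c • a⁺ := ((OrderIso.smulRight hc).map_sup a 0).symm

variable {E : Type*} [NormedAddCommGroup E] [Lattice E] [IsOrderedAddMonoid E]

theorem norm_le_norm_posPart_add_norm_posPart_neg (a : E) : ‖a‖ ≤ ‖a⁺‖ + ‖(-a)⁺‖ := by
  rw [posPart_neg]
  exact (congrArg norm (posPart_sub_negPart a)).symm.trans_le (norm_sub_le _ _)

variable [HasSolidNorm E]

theorem norm_posPart_add_le (a b : E) : ‖(a + b)⁺‖ ≤ ‖a⁺‖ + ‖b⁺‖ := by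
  have hle : (a + b)⁺ ≤ a⁺ + b⁺ :=
    sup_le (add_le_add (le_posPart a) (le_posPart b))
      (add_nonneg (posPart_nonneg a) (posPart_nonneg b))
  refine (norm_le_norm_of_abs_le_abs ?_).trans (norm_add_le _ _)
  rw [abs_of_nonneg (posPart_nonneg _)]
  exact hle.trans (le_abs_self _)

variable [NormedSpace ℝ E] [IsOrderedModule ℝ E]

theorem exists_extension_antidiagonal_le_norm_posPart (L : StrongDual ℝ E) :
    ∃ G : E × E →ₗ[ℝ] ℝ, (∀ a, G (a, -a) = L a) ∧
      ∀ u, G u ≤ ‖L‖ * (‖u.1⁺‖ + ‖u.2⁺‖) := by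
  let F : E × E →ₗ.[ℝ] ℝ :=
    ⟨(-LinearMap.id : E →ₗ[ℝ] E).graph, L.toLinearMap ∘ₗ LinearMap.fst ℝ E E ∘ₗ Submodule.subtype _⟩
  let N : E × E → ℝ := fun u => ‖L‖ * (‖u.1⁺‖ + ‖u.2⁺‖)
  have hNsmul (c : ℝ) (hc : 0 < c) (u : E × E) : N (c • u) = c * N u := by
    simp only [N, Prod.smul_fst, Prod.smul_snd, posPart_smul_of_pos hc, norm_smul,
      Real.norm_of_nonneg hc.le]
    ring
  have hNadd (u v : E × E) : N (u + v) ≤ N u + N v := by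
    simp only [N]
    rw [← mul_add, add_add_add_comm]
    exact mul_le_mul_of_nonneg_left
      (add_le_add (norm_posPart_add_le _ _) (norm_posPart_add_le _ _)) (norm_nonneg L)
  have hFN : ∀ u : F.domain, F u ≤ N u := by
    rintro ⟨⟨a, b⟩, hab⟩
    obtain rfl : b = -a := (LinearMap.mem_graph_iff _ _).1 hab
    calc L a ≤ ‖L‖ * ‖a‖ := (le_abs_self _).trans (L.le_opNorm a)
      _ ≤ ‖L‖ * (‖a⁺‖ + ‖(-a)⁺‖) := mul_le_mul_of_nonneg_left
          (norm_le_norm_posPart_add_norm_posPart_neg a) (norm_nonneg L)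
  obtain ⟨G, hGF, hGN⟩ := exists_extension_of_le_sublinear F N hNsmul hNadd hFN
  exact ⟨G, fun a => hGF ⟨(a, -a), rfl⟩, hGN⟩

/-- The functional `G` on `E × E` extending `(a, -a) ↦ L a` is positive, since it is dominated by a
gauge vanishing on negative elements. -/
theorem exists_positiveLinearMap_sub_eq (L : StrongDual ℝ E) :
    ∃ P N : E →ₚ[ℝ] ℝ, ∀ a, P a - N a = L a := by
  obtain ⟨G, hGL, hGle⟩ := exists_extension_antidiagonal_le_norm_posPart L
  have hG : ∀ u, 0 ≤ u → 0 ≤ G u := fun u hu => by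
    have h := hGle (-u)
    rw [Prod.fst_neg, Prod.snd_neg, posPart_eq_zero.2 (neg_nonpos.2 hu.1),
      posPart_eq_zero.2 (neg_nonpos.2 hu.2), norm_zero, add_zero, mul_zero, map_neg] at h
    exact neg_nonpos.1 h
  refine ⟨.mk₀ (G ∘ₗ LinearMap.inl ℝ E E) fun a ha => hG _ ⟨ha, le_rfl⟩,
    .mk₀ (G ∘ₗ LinearMap.inr ℝ E E) fun a ha => hG _ ⟨le_rfl, ha⟩, fun a => ?_⟩
  change G (a, 0) - G (0, a) = L a
  rw [← map_sub, Prod.mk_sub_mk, sub_zero, zero_sub, hGL]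

end NormedLattice

section Density

theorem dense_of_forall_strongDual_eq_zero {𝕜 E : Type*} [RCLike 𝕜] [NormedAddCommGroup E]
    [NormedSpace 𝕜 E] (S : Submodule 𝕜 E)
    (hS : ∀ L : StrongDual 𝕜 E, (∀ a ∈ S, L a = 0) → L = 0) : Dense (S : Set E) := by
  have : IsClosed (S.topologicalClosure : Set E) := S.isClosed_topologicalClosure
  rw [S.dense_iff_topologicalClosure_eq_top, Submodule.eq_top_iff']
  intro b
  by_contra hb
  obtain ⟨l, hl⟩ := SeparatingDual.exists_ne_zero (R := 𝕜)
    (mt (Submodule.Quotient.mk_eq_zero S.topologicalClosure).1 hb)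
  refine hl (DFunLike.congr_fun (hS (l ∘L S.topologicalClosure.mkQL) fun a ha => ?_) b)
  have ha' : Submodule.Quotient.mk (p := S.topologicalClosure) a = 0 :=
    (Submodule.Quotient.mk_eq_zero _).2 (S.le_topologicalClosure ha)
  exact (congrArg l ha').trans (map_zero l)

theorem denseRange_iff_forall_exists_dist_le {ι X Y : Type*} [TopologicalSpace X] [CompactSpace X]
    [PseudoMetricSpace Y] (F : ι → C(X, Y)) :
    DenseRange F ↔ ∀ (g : C(X, Y)) (ε : ℝ), 0 < ε → ∃ i, ∀ x, dist (F i x) (g x) ≤ ε := by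
  simp only [Metric.denseRange_iff, dist_comm _ (F _)]
  constructor
  · intro h g ε hε
    obtain ⟨i, hi⟩ := h g ε hε
    exact ⟨i, (ContinuousMap.dist_le hε.le).1 hi.le⟩
  · intro h g ε hε
    obtain ⟨i, hi⟩ := h g (ε / 2) (half_pos hε)
    exact ⟨i, ((ContinuousMap.dist_le (half_pos hε).le).2 hi).trans_lt (half_lt_self hε)⟩

end Density

section SignedMeasure

variable {X : Type*} [MeasurableSpace X]

theorem totalVariation_sub_toSignedMeasure_le (μ ν : Measure X) [IsFiniteMeasure μ]
    [IsFiniteMeasure ν] : (μ.toSignedMeasure - ν.toSignedMeasure).totalVariation ≤ μ + ν := by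
  simpa only [SignedMeasure.totalVariation_eq_variation, Measure.variation_toSignedMeasure] using
    VectorMeasure.variation_sub_le (μ := μ.toSignedMeasure) (ν := ν.toSignedMeasure)

theorem posPart_toJordanDecomposition_le_totalVariation (μ : SignedMeasure X) :
    μ.toJordanDecomposition.posPart ≤ μ.totalVariation :=
  Measure.le_add_right le_rfl

theorem negPart_toJordanDecomposition_le_totalVariation (μ : SignedMeasure X) :
    μ.toJordanDecomposition.negPart ≤ μ.totalVariation :=
  Measure.le_add_left le_rfl

theorem innerRegular_of_le [TopologicalSpace X] [T2Space X] [OpensMeasurableSpace X]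
    {μ ν : Measure X} [IsFiniteMeasure ν] (hν : ν.InnerRegular) (hμν : μ ≤ ν) :
    μ.InnerRegular := by
  refine ⟨fun A hA r hr => ?_⟩
  obtain ⟨K, hKA, hK, hlt⟩ :=
    hA.exists_isCompact_sdiff_lt (measure_ne_top ν A) (tsub_pos_of_lt hr).ne'
  refine ⟨K, hKA, hK, lt_of_tsub_lt_tsub_left (a := μ A) ?_⟩
  calc μ A - μ K ≤ μ (A \ K) := le_measure_sdiff
    _ ≤ ν (A \ K) := hμν _
    _ < μ A - r := hlt

variable {E : Type*} [NormedAddCommGroup E]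

theorem vectorMeasure_integrable_toSignedMeasure {μ : Measure X} [IsFiniteMeasure μ] {f : X → E} :
    μ.toSignedMeasure.Integrable f ↔ Integrable f μ := by
  rw [VectorMeasure.Integrable, Measure.variation_toSignedMeasure]

theorem svInt_zero_measure [NormedSpace ℝ E] (f : X → E) : svInt (0 : SignedMeasure X) f = 0 := by
  simp [svInt, SignedMeasure.toJordanDecomposition_zero]

theorem svInt_eq_vectorMeasure_integral [NormedSpace ℝ E] {μ : SignedMeasure X} {f : X → E}
    (hf : Integrable f μ.totalVariation) :
    svInt μ f = μ.integral f (ContinuousLinearMap.lsmul ℝ ℝ).flip := by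
  have hpos := hf.mono_measure (posPart_toJordanDecomposition_le_totalVariation μ)
  have hneg := hf.mono_measure (negPart_toJordanDecomposition_le_totalVariation μ)
  conv_rhs => rw [← μ.toSignedMeasure_toJordanDecomposition, JordanDecomposition.toSignedMeasure]
  rw [VectorMeasure.integral_sub_vectorMeasure
      (vectorMeasure_integrable_toSignedMeasure.2 hpos)
      (vectorMeasure_integrable_toSignedMeasure.2 hneg),
    VectorMeasure.integral_toSignedMeasure, VectorMeasure.integral_toSignedMeasure, svInt]

theorem svInt_sub_toSignedMeasure [NormedSpace ℝ E] {μ ν : Measure X} [IsFiniteMeasure μ]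
    [IsFiniteMeasure ν] {f : X → E} (hμ : Integrable f μ) (hν : Integrable f ν) :
    svInt (μ.toSignedMeasure - ν.toSignedMeasure) f = (∫ x, f x ∂μ) - ∫ x, f x ∂ν := by
  rw [svInt_eq_vectorMeasure_integral
      ((hμ.add_measure hν).mono_measure (totalVariation_sub_toSignedMeasure_le μ ν)),
    VectorMeasure.integral_sub_vectorMeasure
      (vectorMeasure_integrable_toSignedMeasure.2 hμ)
      (vectorMeasure_integrable_toSignedMeasure.2 hν),
    VectorMeasure.integral_toSignedMeasure, VectorMeasure.integral_toSignedMeasure]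

theorem svInt_inner_left [InnerProductSpace ℝ E] [CompleteSpace E] {μ : SignedMeasure X}
    {f : X → E} (hf : Integrable f μ.totalVariation) (v : E) :
    svInt μ (fun x => ⟪v, f x⟫) = ⟪v, svInt μ f⟫ := by
  rw [svInt, svInt, inner_sub_right,
    integral_inner (hf.mono_measure (posPart_toJordanDecomposition_le_totalVariation μ)),
    integral_inner (hf.mono_measure (negPart_toJordanDecomposition_le_totalVariation μ))]

theorem svInt_svInt_inner_self [InnerProductSpace ℝ E] [CompleteSpace E] {μ : SignedMeasure X}
    {f : X → E} (hf : Integrable f μ.totalVariation) :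
    svInt μ (fun x => svInt μ fun y => ⟪f x, f y⟫) = ‖svInt μ f‖ ^ 2 := by
  simp only [svInt_inner_left hf, real_inner_comm (svInt μ f)]
  exact real_inner_self_eq_norm_sq _

theorem svInt_svInt_inner_self_pos_iff [InnerProductSpace ℝ E] {μ : SignedMeasure X} {f : X → E}
    (hf : Integrable f μ.totalVariation) :
    0 < svInt μ (fun x => svInt μ fun y => ⟪f x, f y⟫) ↔
      ∃ v, svInt μ (fun x => ⟪v, f x⟫) ≠ 0 := by
  -- The mean embedding `m` may only exist in the completion of `E`.
  let F : X → UniformSpace.Completion E := fun x => f x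
  have hF : Integrable F μ.totalVariation :=
    (UniformSpace.Completion.toComplL (𝕜 := ℝ) (E := E)).integrable_comp hf
  set m := svInt μ F with hm
  have hdouble : svInt μ (fun x => svInt μ fun y => ⟪f x, f y⟫) = ‖m‖ ^ 2 := by
    simp only [hm, ← svInt_svInt_inner_self hF, F, UniformSpace.Completion.inner_coe]
  have hsingle (v : E) : svInt μ (fun x => ⟪v, f x⟫) = ⟪(v : UniformSpace.Completion E), m⟫ := by
    simp only [hm, ← svInt_inner_left hF, F, UniformSpace.Completion.inner_coe]
  rw [hdouble, sq_pos_iff, norm_ne_zero_iff]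
  simp only [hsingle]
  refine ⟨fun hne => ?_, fun ⟨v, hv⟩ h0 => hv (by rw [h0, inner_zero_right])⟩
  contrapose! hne
  exact UniformSpace.Completion.denseRange_coe.eq_zero_of_inner_right ℝ hne

end SignedMeasure

section CompactSpace

variable {X : Type*} [TopologicalSpace X] [CompactSpace X]

instance hasSolidNorm_continuousMap {E : Type*} [NormedAddCommGroup E] [Lattice E]
    [HasSolidNorm E] [IsOrderedAddMonoid E] : HasSolidNorm C(X, E) where
  solid _ g hfg := (ContinuousMap.norm_le _ (norm_nonneg g)).2 fun x =>
    (norm_le_norm_of_abs_le_abs (hfg x)).trans (g.norm_coe_le_norm x)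

variable [MeasurableSpace X]

theorem integrable_of_continuous_of_compactSpace [OpensMeasurableSpace X] {E : Type*}
    [NormedAddCommGroup E] {f : X → E} (hf : Continuous f) (μ : Measure X) [IsFiniteMeasure μ] :
    Integrable f μ :=
  hf.integrable_of_hasCompactSupport (HasCompactSupport.of_compactSpace f)

variable [BorelSpace X]

theorem continuous_svInt {E : Type*} [NormedAddCommGroup E] [NormedSpace ℝ E]
    [SecondCountableTopologyEither X E] (μ : SignedMeasure X) :
    Continuous fun f : C(X, E) => svInt μ f := by
  have hcont (ν : Measure X) [IsFiniteMeasure ν] :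
      Continuous fun f : C(X, E) => ∫ x, f x ∂ν :=
    (continuous_integral.comp (ContinuousMap.toLp (E := E) 1 ν ℝ).continuous).congr
      fun f => integral_congr_ae (ContinuousMap.coeFn_toLp ν f)
  exact (hcont _).sub (hcont _)

variable [T2Space X]

theorem exists_regular_integral_eq (P : C(X, ℝ) →ₚ[ℝ] ℝ) :
    ∃ μ : Measure X, IsFiniteMeasure μ ∧ μ.Regular ∧ ∀ f : C(X, ℝ), ∫ x, f x ∂μ = P f := by
  let Λ : CompactlySupportedContinuousMap X ℝ →ₚ[ℝ] ℝ := PositiveLinearMap.mk₀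
    { toFun := fun f => P f.toContinuousMap
      map_add' := fun f g => map_add P f.toContinuousMap g.toContinuousMap
      map_smul' := fun c f => map_smul P c f.toContinuousMap }
    fun f hf => map_nonneg P (a := f.toContinuousMap) hf
  exact ⟨RealRMK.rieszMeasure Λ, inferInstance, inferInstance, fun f =>
    RealRMK.integral_rieszMeasure Λ (CompactlySupportedContinuousMap.continuousMapEquiv f)⟩

theorem exists_signedMeasure_svInt_eq (L : StrongDual ℝ C(X, ℝ)) :
    ∃ μ : SignedMeasure X, μ.totalVariation.InnerRegular ∧ ∀ f : C(X, ℝ), svInt μ f = L f := by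
  obtain ⟨P, N, hL⟩ := exists_positiveLinearMap_sub_eq L
  obtain ⟨μ, _, _, hμ⟩ := exists_regular_integral_eq P
  obtain ⟨ν, _, _, hν⟩ := exists_regular_integral_eq N
  refine ⟨μ.toSignedMeasure - ν.toSignedMeasure,
    innerRegular_of_le inferInstance (totalVariation_sub_toSignedMeasure_le μ ν), fun f => ?_⟩
  rw [svInt_sub_toSignedMeasure (integrable_of_continuous_of_compactSpace f.continuous μ)
    (integrable_of_continuous_of_compactSpace f.continuous ν), hμ, hν, hL]

theorem signedMeasure_eq_zero_of_svInt_eq_zero {μ : SignedMeasure X}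
    (hμ : μ.totalVariation.InnerRegular) (h : ∀ f : C(X, ℝ), svInt μ f = 0) : μ = 0 := by
  have hpos := innerRegular_of_le hμ (posPart_toJordanDecomposition_le_totalVariation μ)
  have hneg := innerRegular_of_le hμ (negPart_toJordanDecomposition_le_totalVariation μ)
  have heq : μ.toJordanDecomposition.posPart = μ.toJordanDecomposition.negPart :=
    Measure.ext_of_integral_eq_on_compactlySupported fun f => sub_eq_zero.1 (h f.toContinuousMap)
  rw [← μ.toSignedMeasure_toJordanDecomposition, JordanDecomposition.toSignedMeasure]
  exact sub_eq_zero.2 (Measure.toSignedMeasure_congr heq)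

theorem dense_iff_forall_svInt_eq_zero (S : Submodule ℝ C(X, ℝ)) :
    Dense (S : Set C(X, ℝ)) ↔ ∀ μ : SignedMeasure X, μ.totalVariation.InnerRegular →
      (∀ f ∈ S, svInt μ f = 0) → μ = 0 := by
  constructor
  · intro hS μ hμ hμS
    have hzero : (fun f : C(X, ℝ) => svInt μ f) = 0 :=
      (continuous_svInt μ).ext_on hS continuous_zero hμS
    exact signedMeasure_eq_zero_of_svInt_eq_zero hμ (congrFun hzero)
  · intro h
    refine dense_of_forall_strongDual_eq_zero S fun L hLS => ?_
    obtain ⟨μ, hμ, hμL⟩ := exists_signedMeasure_svInt_eq L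
    obtain rfl : μ = 0 := h μ hμ fun f hf => (hμL f).trans (hLS f hf)
    ext f
    exact (hμL f).symm.trans (svInt_zero_measure f)

end CompactSpace

section FeatureMap

variable {X H : Type*} [TopologicalSpace X] [NormedAddCommGroup H] [InnerProductSpace ℝ H]

theorem continuous_of_continuous_inner {Φ : X → H}
    (hΦ : Continuous fun p : X × X => ⟪Φ p.1, Φ p.2⟫) : Continuous Φ := by
  refine continuous_iff_continuousAt.2 fun x => tendsto_iff_norm_sub_tendsto_zero.2 ?_
  have hsq : Continuous fun y => ⟪Φ y, Φ y⟫ - 2 * ⟪Φ y, Φ x⟫ + ⟪Φ x, Φ x⟫ :=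
    ((hΦ.comp (continuous_id.prodMk continuous_id)).sub
      (continuous_const.mul (hΦ.comp (continuous_id.prodMk continuous_const)))).add continuous_const
  have hnorm (y : X) :
      √(⟪Φ y, Φ y⟫ - 2 * ⟪Φ y, Φ x⟫ + ⟪Φ x, Φ x⟫) = ‖Φ y - Φ x‖ := by
    rw [real_inner_self_eq_norm_sq, real_inner_self_eq_norm_sq, ← norm_sub_sq_real,
      Real.sqrt_sq (norm_nonneg _)]
  simpa only [hnorm, sub_self, norm_zero] using hsq.sqrt.tendsto x

/-- The map sending a vector `f` of the feature space of `Φ` to the function `x ↦ ⟪f, Φ x⟫`. For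
the canonical feature map `Φ x = k(·, x)` of an RKHS it is the inclusion of the RKHS into `C(X, ℝ)`.
-/
def featureFunction (Φ : C(X, H)) : H →ₗ[ℝ] C(X, ℝ) where
  toFun f := ⟨fun x => ⟪f, Φ x⟫, continuous_const.inner Φ.continuous⟩
  map_add' f g := by ext x; exact inner_add_left f g (Φ x)
  map_smul' c f := by ext x; exact real_inner_smul_left f (Φ x) c

end FeatureMap

theorem stmt3_general
    {X : Type*} [TopologicalSpace X] [CompactSpace X] [T2Space X]
    [MeasurableSpace X] [BorelSpace X]
    {H : Type*} [NormedAddCommGroup H] [InnerProductSpace ℝ H]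
    (Φ : X → H) (hΦ : Continuous fun p : X × X => ⟪Φ p.1, Φ p.2⟫) :
    (∀ (g : C(X, ℝ)) (ε : ℝ), 0 < ε → ∃ f : H, ∀ x : X, |⟪f, Φ x⟫ - g x| ≤ ε) ↔
      ∀ μ : SignedMeasure X, μ.totalVariation.InnerRegular → μ ≠ 0 →
        0 < svInt μ (fun x => svInt μ (fun y => ⟪Φ x, Φ y⟫)) := by
  have hΦc : Continuous Φ := continuous_of_continuous_inner hΦ
  let F : H →ₗ[ℝ] C(X, ℝ) := featureFunction ⟨Φ, hΦc⟩
  have hdense : DenseRange F ↔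
      ∀ (g : C(X, ℝ)) (ε : ℝ), 0 < ε → ∃ f : H, ∀ x : X, |⟪f, Φ x⟫ - g x| ≤ ε :=
    denseRange_iff_forall_exists_dist_le F
  have hpos (μ : SignedMeasure X) : 0 < svInt μ (fun x => svInt μ (fun y => ⟪Φ x, Φ y⟫)) ↔
      ∃ f, svInt μ (F f) ≠ 0 :=
    svInt_svInt_inner_self_pos_iff (integrable_of_continuous_of_compactSpace hΦc _)
  rw [← hdense, DenseRange, ← LinearMap.coe_range, dense_iff_forall_svInt_eq_zero]
  refine forall₂_congr fun μ _ => ?_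
  rw [hpos, ← not_imp_not]
  simp only [LinearMap.mem_range, forall_exists_index, forall_apply_eq_imp_iff, not_forall, ne_eq]

/-- Let `X` be a compact Hausdorff space and `k` a continuous symmetric
positive definite kernel on `X` with RKHS `H`.  Then `k` is c-universal iff
`∫∫ k(x,y) dμ(x) dμ(y) > 0` for every nonzero finite signed Radon measure `μ` on `X`. -/
theorem stmt3
    {X : Type*} [TopologicalSpace X] [CompactSpace X] [T2Space X]
    [MeasurableSpace X] [BorelSpace X]
    (k : X → X → ℝ) (hkcont : Continuous fun p : X × X => k p.1 p.2)
    {H : Type*} [NormedAddCommGroup H] [InnerProductSpace ℝ H] [CompleteSpace H]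
    (T : H →ₗ[ℝ] (X → ℝ)) (hT : Function.Injective T)
    (Φ : X → H)
    (hk : ∀ x y : X, k x y = ⟪Φ x, Φ y⟫)
    (hrepro : ∀ (f : H) (x : X), T f x = ⟪f, Φ x⟫) :
    (∀ (g : C(X, ℝ)) (ε : ℝ), 0 < ε → ∃ f : H, ∀ x : X, |T f x - g x| ≤ ε) ↔
      ∀ μ : MeasureTheory.SignedMeasure X, μ.totalVariation.InnerRegular → μ ≠ 0 →
        0 < svInt μ (fun x => svInt μ (fun y => k x y)) := by
  simpa only [hk, hrepro] using stmt3_general Φ (by simpa only [hk] using hkcont)
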